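/- Let H be a finite-dimensional complex Hilbert space, Â and B̂ self-adjoint operators with nondegenerate spectra satisfying ⟨φ_a^Â, φ_b^B̂⟩ ≠ 0 for all (a,b), and ρ̂ a density matrix with ⟨φ_b^B̂, ρ̂ φ_b^B̂⟩ ≠ 0 for all b ∈ σ(B̂). Then the Q-conditional expectation associated to the left Kirkwood-Dirac representation coincides with the left quantum conditional expectation: for every X̂ ∈ 𝓛(H), Σ_{(a,b)} conj(Q̃^{KD,ℓ}_{a,b}(X̂†)) · (Q^{KD,ℓ}_{a,b}(ρ̂)/⟨φ_b^B̂, ρ̂ φ_b^B̂⟩) · Π_b^B̂ = Σ_{b∈σ(B̂)} (⟨φ_b^B̂, X̂ρ̂ φ_b^B̂⟩/⟨φ_b^B̂, ρ̂ φ_b^B̂⟩) Π_b^B̂ = 𝔼^ℓ_ρ̂(X̂|B̂); similarly, the Q-conditional expectation associated to the right Kirkwood-Dirac representation equals 𝔼^r_ρ̂(X̂|B̂) := Σ_b (⟨φ_b^B̂, ρ̂X̂ φ_b^B̂⟩/⟨φ_b^B̂, ρ̂ φ_b^B̂⟩) Π_b^B̂. -/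

import Mathlib

open scoped ComplexOrder
noncomputable section

variable {H : Type*} [NormedAddCommGroup H] [InnerProductSpace ℂ H] [FiniteDimensional ℂ H]

/-- The rank-one orthogonal projector onto the line spanned by a unit vector `v`. -/
def proj (v : H) : H →ₗ[ℂ] H where
  toFun w := (inner ℂ v w : ℂ) • v
  map_add' x y := by simp [inner_add_right, add_smul]
  map_smul' c x := by simp [inner_smul_right, smul_smul]

/-- The operator `f(Ŷ) = Σ_y f(y) Π_y` associated to a function `f` on the spectrum,
for an operator with orthonormal eigenbasis `φ`. -/
def opF {ι : Type*} [Fintype ι] (φ : ι → H) (f : ι → ℂ) : H →ₗ[ℂ] H :=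
  ∑ i, f i • proj (φ i)


/-- The left quantum conditional expectation
`𝔼^ℓ_ρ̂(X̂|B̂) = Σ_b (⟨φ_b^B̂, X̂ρ̂ φ_b^B̂⟩/⟨φ_b^B̂, ρ̂ φ_b^B̂⟩) Π_b^B̂`. -/
def EcondL {ι : Type*} [Fintype ι] (φ : ι → H) (ρ X : H →ₗ[ℂ] H) : H →ₗ[ℂ] H :=
  ∑ i, ((inner ℂ (φ i) ((X ∘ₗ ρ) (φ i)) : ℂ) / (inner ℂ (φ i) (ρ (φ i)) : ℂ)) • proj (φ i)

/-- The right quantum conditional expectation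
`𝔼^r_ρ̂(X̂|B̂) = Σ_b (⟨φ_b^B̂, ρ̂X̂ φ_b^B̂⟩/⟨φ_b^B̂, ρ̂ φ_b^B̂⟩) Π_b^B̂`. -/
def EcondR {ι : Type*} [Fintype ι] (φ : ι → H) (ρ X : H →ₗ[ℂ] H) : H →ₗ[ℂ] H :=
  ∑ i, ((inner ℂ (φ i) ((ρ ∘ₗ X) (φ i)) : ℂ) / (inner ℂ (φ i) (ρ (φ i)) : ℂ)) • proj (φ i)

/-!
The conjugate of the symbol of `X†` at `(u, v)` is `⟨v, X u⟩ / ⟨v, u⟩`, whose denominator cancels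
the overlap `⟨v, u⟩` in the quasiprobability of `ρ` at `(u, v)`. What remains is
`⟨v, X u⟩ ⟨u, ρ v⟩`, and summing it over `u` in an orthonormal basis inserts a resolution of the
identity between `X` and `ρ`, leaving `⟨v, X ρ v⟩`. The right representation is the left one with
`u` and `v` exchanged, so the sum over `u` leaves `⟨v, ρ X v⟩` instead.
-/

section KirkwoodDirac

open scoped InnerProductSpace ComplexConjugate

variable {𝕜 E : Type*} [RCLike 𝕜] [NormedAddCommGroup E] [InnerProductSpace 𝕜 E]

/-- The Kirkwood-Dirac quasiprobability of `ρ` at the pair of vectors `(u, v)`. With `u = φ_a^Â` and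
`v = φ_b^B̂` it is the left quasiprobability `Q^{KD,ℓ}_{a,b}(ρ)`; exchanging the two vectors gives
the right one. -/
def kirkwoodDirac (u v : E) (ρ : E →ₗ[𝕜] E) : 𝕜 :=
  ⟪v, u⟫_𝕜 * ⟪u, ρ v⟫_𝕜

/-- The Kirkwood-Dirac symbol (weak value) of `X` at the pair of vectors `(u, v)`: the left symbol
`Q̃^{KD,ℓ}_{a,b}(X)` for `u = φ_a^Â` and `v = φ_b^B̂`, the right one after exchanging the two
vectors. It is the junk value `0` when `u` and `v` are orthogonal. -/
def kirkwoodDiracSymbol (u v : E) (X : E →ₗ[𝕜] E) : 𝕜 :=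
  ⟪u, X v⟫_𝕜 / ⟪u, v⟫_𝕜

theorem conj_kirkwoodDiracSymbol_adjoint [FiniteDimensional 𝕜 E] (u v : E) (X : E →ₗ[𝕜] E) :
    conj (kirkwoodDiracSymbol u v (LinearMap.adjoint X)) = kirkwoodDiracSymbol v u X := by
  simp only [kirkwoodDiracSymbol, map_div₀, inner_conj_symm, LinearMap.adjoint_inner_left]

theorem kirkwoodDiracSymbol_mul_kirkwoodDirac {u v : E} (huv : ⟪u, v⟫_𝕜 ≠ 0) (X ρ : E →ₗ[𝕜] E) :
    kirkwoodDiracSymbol v u X * kirkwoodDirac u v ρ = ⟪v, X u⟫_𝕜 * ⟪u, ρ v⟫_𝕜 := by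
  have hvu : ⟪v, u⟫_𝕜 ≠ 0 := mt inner_eq_zero_symm.mp huv
  rw [kirkwoodDiracSymbol, kirkwoodDirac, ← mul_assoc, div_mul_cancel₀ _ hvu]

theorem sum_inner_map_mul_inner {ι F : Type*} [Fintype ι] [NormedAddCommGroup F]
    [InnerProductSpace 𝕜 F] (e : OrthonormalBasis ι 𝕜 E) (T : E →ₗ[𝕜] F) (x : F) (y : E) :
    ∑ i, ⟪x, T (e i)⟫_𝕜 * ⟪e i, y⟫_𝕜 = ⟪x, T y⟫_𝕜 := by
  conv_rhs => rw [← e.sum_repr' y, map_sum, inner_sum]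
  simp only [map_smul, inner_smul_right, mul_comm]

variable {ι : Type*} [Fintype ι] [FiniteDimensional 𝕜 E]

theorem sum_conj_kirkwoodDiracSymbol_mul_kirkwoodDirac_left (e : OrthonormalBasis ι 𝕜 E) {v : E}
    (hv : ∀ i, ⟪e i, v⟫_𝕜 ≠ 0) (ρ X : E →ₗ[𝕜] E) :
    ∑ i, conj (kirkwoodDiracSymbol (e i) v (LinearMap.adjoint X)) * kirkwoodDirac (e i) v ρ =
      ⟪v, (X ∘ₗ ρ) v⟫_𝕜 := by
  simp only [conj_kirkwoodDiracSymbol_adjoint, kirkwoodDiracSymbol_mul_kirkwoodDirac (hv _)]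
  exact sum_inner_map_mul_inner e X v (ρ v)

theorem sum_conj_kirkwoodDiracSymbol_mul_kirkwoodDirac_right (e : OrthonormalBasis ι 𝕜 E) {v : E}
    (hv : ∀ i, ⟪e i, v⟫_𝕜 ≠ 0) (ρ X : E →ₗ[𝕜] E) :
    ∑ i, conj (kirkwoodDiracSymbol v (e i) (LinearMap.adjoint X)) * kirkwoodDirac v (e i) ρ =
      ⟪v, (ρ ∘ₗ X) v⟫_𝕜 := by
  have hv' : ∀ i, ⟪v, e i⟫_𝕜 ≠ 0 := fun i => mt inner_eq_zero_symm.mp (hv i)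
  simp only [conj_kirkwoodDiracSymbol_adjoint, kirkwoodDiracSymbol_mul_kirkwoodDirac (hv' _)]
  simpa only [LinearMap.comp_apply, mul_comm] using
    sum_inner_map_mul_inner e ρ v (X v)

end KirkwoodDirac

section ConditionalExpectation

open scoped InnerProductSpace ComplexConjugate

variable {ιA ιB : Type*} [Fintype ιA] [Fintype ιB]

/-- The `Q`-conditional expectation of `X` in the state `ρ`, for a quasiprobability representation
`Q` with symbol `Qs`, both indexed by `(a, b)`, where `b` labels the conditioning vectors `φ b`. -/
def qCondExp (Q Qs : ιA → ιB → (H →ₗ[ℂ] H) → ℂ) (φ : ιB → H) (ρ X : H →ₗ[ℂ] H) : H →ₗ[ℂ] H :=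
  ∑ p : ιA × ιB,
    (conj (Qs p.1 p.2 (LinearMap.adjoint X)) * (Q p.1 p.2 ρ / ⟪φ p.2, ρ (φ p.2)⟫_ℂ)) •
      proj (φ p.2)

theorem qCondExp_eq_opF {Q Qs : ιA → ιB → (H →ₗ[ℂ] H) → ℂ} {φ : ιB → H} {ρ X : H →ₗ[ℂ] H}
    {f : ιB → ℂ} (hρ : ∀ b, ⟪φ b, ρ (φ b)⟫_ℂ ≠ 0)
    (hf : ∀ b, ∑ a, conj (Qs a b (LinearMap.adjoint X)) * Q a b ρ = f b * ⟪φ b, ρ (φ b)⟫_ℂ) :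
    qCondExp Q Qs φ ρ X = opF φ f := by
  rw [qCondExp, opF, Fintype.sum_prod_type_right]
  refine Finset.sum_congr rfl fun b _ => ?_
  simp only [← Finset.sum_smul, ← mul_div_assoc, ← Finset.sum_div, hf,
    mul_div_cancel_right₀ _ (hρ b)]

theorem stmt16_general (φA : OrthonormalBasis ιA ℂ H) (φB : ιB → H)
    (hAB : ∀ a b, ⟪φA a, φB b⟫_ℂ ≠ 0) (ρ : H →ₗ[ℂ] H) (hρB : ∀ b, ⟪φB b, ρ (φB b)⟫_ℂ ≠ 0) :
    (∀ X : H →ₗ[ℂ] H,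
      qCondExp (fun a b => kirkwoodDirac (φA a) (φB b))
        (fun a b => kirkwoodDiracSymbol (φA a) (φB b)) φB ρ X = EcondL φB ρ X) ∧
    (∀ X : H →ₗ[ℂ] H,
      qCondExp (fun a b => kirkwoodDirac (φB b) (φA a))
        (fun a b => kirkwoodDiracSymbol (φB b) (φA a)) φB ρ X = EcondR φB ρ X) := by
  refine ⟨fun X => qCondExp_eq_opF hρB fun b => ?_, fun X => qCondExp_eq_opF hρB fun b => ?_⟩
  · rw [sum_conj_kirkwoodDiracSymbol_mul_kirkwoodDirac_left φA (hAB · b),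
      div_mul_cancel₀ _ (hρB b)]
  · rw [sum_conj_kirkwoodDiracSymbol_mul_kirkwoodDirac_right φA (hAB · b),
      div_mul_cancel₀ _ (hρB b)]

end ConditionalExpectation

/-- the `Q`-conditional expectation associated to the left (resp. right)
Kirkwood-Dirac representation, `Σ_{(a,b)} conj(Q̃^{KD,ℓ}_{a,b}(X̂†)) ·
(Q^{KD,ℓ}_{a,b}(ρ̂)/⟨φ_b^B̂, ρ̂ φ_b^B̂⟩) · Π_b^B̂`, coincides with the left (resp. right)
quantum conditional expectation `𝔼^ℓ_ρ̂(X̂|B̂)` (resp. `𝔼^r_ρ̂(X̂|B̂)`). -/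
theorem stmt16 {ιA ιB : Type*} [Fintype ιA] [Fintype ιB]
    (φA : OrthonormalBasis ιA ℂ H) (φB : OrthonormalBasis ιB ℂ H)
    (A B : H →ₗ[ℂ] H) (α : ιA → ℝ) (β : ιB → ℝ)
    (hα : Function.Injective α) (hβ : Function.Injective β)
    (hA : ∀ a, A (φA a) = (α a : ℂ) • φA a) (hB : ∀ b, B (φB b) = (β b : ℂ) • φB b)
    (hAB : ∀ (a : ιA) (b : ιB), (inner ℂ (φA a) (φB b) : ℂ) ≠ 0)
    (ρ : H →ₗ[ℂ] H) (hpos : ∀ v : H, 0 ≤ (inner ℂ v (ρ v) : ℂ))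
    (htr : LinearMap.trace ℂ H ρ = 1)
    (hρB : ∀ b : ιB, (inner ℂ (φB b) (ρ (φB b)) : ℂ) ≠ 0) :
    (∀ X : H →ₗ[ℂ] H,
      (∑ p : ιA × ιB,
        ((starRingEnd ℂ)
            ((inner ℂ (φA p.1) ((LinearMap.adjoint X) (φB p.2)) : ℂ) /
              (inner ℂ (φA p.1) (φB p.2) : ℂ)) *
          (((inner ℂ (φB p.2) (φA p.1) : ℂ) * (inner ℂ (φA p.1) (ρ (φB p.2)) : ℂ)) /
            (inner ℂ (φB p.2) (ρ (φB p.2)) : ℂ))) • proj (φB p.2)) =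
        EcondL (fun b => φB b) ρ X) ∧
    (∀ X : H →ₗ[ℂ] H,
      (∑ p : ιA × ιB,
        ((starRingEnd ℂ)
            ((inner ℂ (φB p.2) ((LinearMap.adjoint X) (φA p.1)) : ℂ) /
              (inner ℂ (φB p.2) (φA p.1) : ℂ)) *
          (((inner ℂ (φA p.1) (φB p.2) : ℂ) * (inner ℂ (φB p.2) (ρ (φA p.1)) : ℂ)) /
            (inner ℂ (φB p.2) (ρ (φB p.2)) : ℂ))) • proj (φB p.2)) =
        EcondR (fun b => φB b) ρ X) :=
  stmt16_general φA (fun b => φB b) hAB ρ hρB
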